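/- arXiv:0812.4209 — 2 statements merged into one kernel-verified Lean document; each statement's English description precedes it below -/
import Mathlib

section
/- For every positive integer k there exist complex constants c_1, …, c_{k+1} (equivalently, a polynomial P of degree k+1 without constant term) with the following property: for every function f : ℝ → ℂ of class C^{k+1} such that for each ℓ ∈ {0, 1, …, k+1} the function t ↦ t^ℓ f^{(ℓ)}(t) is integrable on ℝ and tends to 0 as t → ±∞, and for every v ∈ ℝ, one has ∫_ℝ f(t) cos(vt) dt = Σ_{j=1}^{k+1} c_j ∫_ℝ (O^j f)(t) · 𝓑_k(t v) dt, where 𝓑_k(u) = ∫_0^1 (1−s²)^k cos(su) ds. (This is Lemma 5.1 of the paper, with the modified Bessel kernel 𝓙_{k+1/2}(u) = J_{k+1/2}(u)/u^{k+1/2} written, up to a positive constant factor, as the elementary Poisson-type integral 𝓑_k.) -/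
open MeasureTheory Filter

noncomputable section

/-- The operator `(O f)(t) = t * f'(t)` on functions on the real line. -/
def Oop : (ℝ → ℂ) → (ℝ → ℂ) := fun f t => (t : ℂ) * deriv f t

/-- `𝓑_k(u) = ∫_0^1 (1 - s²)^k cos (s u) ds`. -/
def Bk (k : ℕ) (u : ℝ) : ℝ := ∫ s in (0:ℝ)..1, (1 - s ^ 2) ^ k * Real.cos (s * u)

/-- The class of admissible functions of order `n`. -/
def Adm (n : ℕ) (f : ℝ → ℂ) : Prop :=
  ContDiff ℝ (n : ℕ) f ∧
  (∀ ℓ : ℕ, ℓ ≤ n → Integrable (fun t : ℝ => (t : ℂ) ^ ℓ * iteratedDeriv ℓ f t)) ∧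
  (∀ ℓ : ℕ, ℓ ≤ n →
    Tendsto (fun t : ℝ => (t : ℂ) ^ ℓ * iteratedDeriv ℓ f t) (cocompact ℝ) (nhds 0))

lemma Adm.mono {n m : ℕ} {f : ℝ → ℂ} (h : Adm n f) (hm : m ≤ n) : Adm m f :=
  ⟨h.1.of_le (by exact_mod_cast hm), fun l hl => h.2.1 l (hl.trans hm),
    fun l hl => h.2.2 l (hl.trans hm)⟩

lemma contDiff_Oop {n : ℕ} {f : ℝ → ℂ} (h : ContDiff ℝ (n + 1 : ℕ) f) :
    ContDiff ℝ (n : ℕ) (Oop f) := by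
  have h1 : ContDiff ℝ (n : ℕ) (deriv f) := by
    have := (contDiff_succ_iff_deriv (n := (n : ℕ)) (f := f) (𝕜 := ℝ)).1 (by exact_mod_cast h)
    exact this.2.2
  exact Complex.ofRealCLM.contDiff.mul h1

lemma iteratedDeriv_Oop {n : ℕ} {f : ℝ → ℂ} (h : ContDiff ℝ (n + 1 : ℕ) f) :
    ∀ l : ℕ, l ≤ n → ∀ t : ℝ, iteratedDeriv l (Oop f) t =
      (t : ℂ) * iteratedDeriv (l + 1) f t + (l : ℂ) * iteratedDeriv l f t := by
  intro l
  induction l with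
  | zero => intro _ t; simp [Oop]
  | succ l ih =>
    intro hl t
    have e : iteratedDeriv l (Oop f) = fun t : ℝ =>
      (t : ℂ) * iteratedDeriv (l + 1) f t + (l : ℂ) * iteratedDeriv l f t :=
      funext (ih (by omega))
    have d : ∀ j : ℕ, j < n + 1 → HasDerivAt (iteratedDeriv j f) (iteratedDeriv (j + 1) f t) t := by
      intro j hj
      rw [iteratedDeriv_succ]
      exact ((h.differentiable_iteratedDeriv j (by exact_mod_cast hj)) t).hasDerivAt
    have d0 : HasDerivAt (fun t : ℝ => (t : ℂ)) 1 t := Complex.ofRealCLM.hasDerivAt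
    rw [iteratedDeriv_succ, e]
    have := (d0.mul (d (l + 1) (by omega))).add ((d l (by omega)).const_mul (l : ℂ))
    rw [show (fun t : ℝ => (t : ℂ) * iteratedDeriv (l + 1) f t + (l : ℂ) * iteratedDeriv l f t) =
      ((fun t : ℝ => (t : ℂ)) * iteratedDeriv (l + 1) f + fun t => (l : ℂ) * iteratedDeriv l f t)
      from rfl]
    rw [this.deriv]
    push_cast
    ring

lemma Adm.Oop {n : ℕ} {f : ℝ → ℂ} (h : Adm (n + 1) f) : Adm n (Oop f) := by
  have key : ∀ l : ℕ, l ≤ n → (fun t : ℝ => (t : ℂ) ^ l * iteratedDeriv l (_root_.Oop f) t) =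
      fun t : ℝ => (t : ℂ) ^ (l + 1) * iteratedDeriv (l + 1) f t +
        (l : ℂ) * ((t : ℂ) ^ l * iteratedDeriv l f t) := by
    intro l hl
    funext t
    rw [iteratedDeriv_Oop h.1 l hl]
    ring
  refine ⟨contDiff_Oop h.1, fun l hl => ?_, fun l hl => ?_⟩
  · rw [key l hl]
    exact (h.2.1 (l + 1) (by omega)).add ((h.2.1 l (by omega)).const_mul _)
  · rw [key l hl]
    simpa using (h.2.2 (l + 1) (by omega)).add ((h.2.2 l (by omega)).const_mul (l : ℂ))

lemma Adm.iter {n : ℕ} {f : ℝ → ℂ} (j : ℕ) (h : Adm (n + j) f) : Adm n (_root_.Oop^[j] f) := by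
  induction j generalizing f with
  | zero => exact h
  | succ j ih =>
    rw [Function.iterate_succ_apply]
    exact ih (Adm.Oop (n := n + j) h)

lemma Adm.integrable {n : ℕ} {f : ℝ → ℂ} (h : Adm n f) : Integrable f := by
  simpa using h.2.1 0 (Nat.zero_le _)

lemma integrable_mul_kernel {g : ℝ → ℂ} (hg : Integrable g) {b : ℝ → ℝ} (hb : Continuous b)
    {M : ℝ} (hM : ∀ u, |b u| ≤ M) (v : ℝ) : Integrable (fun t : ℝ => g t * (b (t * v) : ℂ)) := by
  refine hg.mul_bdd (c := M) ?_ ?_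
  · exact (Complex.continuous_ofReal.comp (hb.comp (by fun_prop))).aestronglyMeasurable
  · exact Eventually.of_forall fun t => by simpa using hM (t * v)

lemma continuous_kernel {g : ℝ → ℂ} (hg : Integrable g) {b : ℝ → ℝ} (hb : Continuous b)
    {M : ℝ} (hM : ∀ u, |b u| ≤ M) : Continuous (fun v : ℝ => ∫ t : ℝ, g t * (b (t * v) : ℂ)) := by
  refine continuous_of_dominated (bound := fun t => ‖g t‖ * M) ?_ ?_ ?_ ?_
  · exact fun v => (integrable_mul_kernel hg hb hM v).aestronglyMeasurable
  · intro v
    refine Eventually.of_forall fun t => ?_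
    rw [norm_mul]
    gcongr
    simpa using hM (t * v)
  · exact hg.norm.mul_const M
  · refine Eventually.of_forall fun t => ?_
    exact continuous_const.mul (Complex.continuous_ofReal.comp (hb.comp (by fun_prop)))

lemma parts_step {g : ℝ → ℂ} (hg : Adm 1 g) {b c : ℝ → ℝ} (hb : Continuous b)
    (hc : Continuous c) {M N K : ℝ} (hM : ∀ u, |b u| ≤ M) (hN : ∀ u, |c u| ≤ N)
    (hK : ∀ u, |u * b u| ≤ K) (hd : ∀ u, HasDerivAt (fun u => u * b u) (c u) u) (v : ℝ) :
    ∫ t : ℝ, g t * (c (t * v) : ℂ) = - ∫ t : ℝ, Oop g t * (b (t * v) : ℂ) := by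
  have hO : Integrable (Oop g) := (Adm.Oop (n := 0) hg).integrable
  have hgi := hg.integrable
  have cl : Continuous (fun v : ℝ => ∫ t : ℝ, g t * (c (t * v) : ℂ)) :=
    continuous_kernel hgi hc hN
  have cr : Continuous (fun v : ℝ => - ∫ t : ℝ, Oop g t * (b (t * v) : ℂ)) :=
    (continuous_kernel hO hb hM).neg
  refine congrFun (Continuous.ext_on (dense_compl_singleton (0 : ℝ)) cl cr ?_) v
  intro v hv
  have hv : v ≠ 0 := by simpa using hv
  have hgd : ∀ t, HasDerivAt g (deriv g t) t := fun t =>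
    ((hg.1.differentiable (by norm_num)) t).hasDerivAt
  have hwd : ∀ t : ℝ, HasDerivAt (fun t : ℝ => ((t * b (t * v) : ℝ) : ℂ)) (c (t * v) : ℂ) t := by
    intro t
    have h1 : HasDerivAt (fun t : ℝ => t * v) v t := by simpa using (hasDerivAt_id t).mul_const v
    have h2 := ((hd (t * v)).comp t h1).const_mul v⁻¹
    have h3 : HasDerivAt (fun t : ℝ => t * b (t * v)) (c (t * v)) t := by
      have e1 : (fun t : ℝ => t * b (t * v)) =
          fun y => v⁻¹ * ((fun u => u * b u) ∘ fun t => t * v) y := by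
        funext s; simp only [Function.comp]; field_simp
      rw [e1]
      exact h2.congr_deriv (by field_simp)
    exact h3.ofReal_comp
  have g0 : Tendsto g (cocompact ℝ) (nhds 0) := by simpa using hg.2.2 0 (Nat.zero_le _)
  have lim : Tendsto (g * fun t : ℝ => ((t * b (t * v) : ℝ) : ℂ)) (cocompact ℝ) (nhds 0) := by
    refine squeeze_zero_norm (a := fun t => ‖g t‖ * (|v⁻¹| * K)) ?_ ?_
    · intro t
      rw [Pi.mul_apply, norm_mul]
      gcongr
      rw [Complex.norm_real, Real.norm_eq_abs]
      have : t * b (t * v) = v⁻¹ * ((t * v) * b (t * v)) := by field_simp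
      rw [this, abs_mul]
      gcongr
      exact hK _
    · simpa using g0.norm.mul_const (|v⁻¹| * K)
  have eqO : (fun t : ℝ => deriv g t * ((t * b (t * v) : ℝ) : ℂ)) =
      fun t : ℝ => Oop g t * (b (t * v) : ℂ) := by
    funext t; simp only [Oop]; push_cast; ring
  have := integral_mul_deriv_eq_deriv_mul (u := g) (v := fun t : ℝ => ((t * b (t * v) : ℝ) : ℂ))
    (u' := deriv g) (v' := fun t : ℝ => (c (t * v) : ℂ)) (a' := 0) (b' := 0) (fun t _ => hgd t)
    (fun t _ => hwd t)
    (integrable_mul_kernel hgi hc hN v)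
    (by
      have := integrable_mul_kernel hO hb hM v
      rw [← eqO] at this
      exact this)
    (lim.mono_left atBot_le_cocompact) (lim.mono_left atTop_le_cocompact)
  simp only [eqO] at this
  simpa using this

/-! Facts on the kernel -/

lemma Bk_hasDerivAt (m : ℕ) (u : ℝ) :
    HasDerivAt (Bk m) (∫ s in (0:ℝ)..1, (1 - s ^ 2) ^ m * (-Real.sin (s * u) * s)) u := by
  refine (intervalIntegral.hasDerivAt_integral_of_dominated_loc_of_deriv_le
    (F := fun u s => (1 - s ^ 2) ^ m * Real.cos (s * u))
    (F' := fun u s => (1 - s ^ 2) ^ m * (-Real.sin (s * u) * s))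
    (bound := fun s => |(1 - s ^ 2) ^ m| * |s|) (s := Set.univ) (Filter.univ_mem) ?_ ?_ ?_ ?_ ?_ ?_).2
  · exact Eventually.of_forall fun x =>
      (by fun_prop : Continuous fun s : ℝ => (1 - s ^ 2) ^ m * Real.cos (s * x)).aestronglyMeasurable
  · exact (by fun_prop : Continuous fun s : ℝ =>
      (1 - s ^ 2) ^ m * Real.cos (s * u)).intervalIntegrable _ _
  · exact (by fun_prop : Continuous fun s : ℝ =>
      (1 - s ^ 2) ^ m * (-Real.sin (s * u) * s)).aestronglyMeasurable
  · refine Eventually.of_forall fun s _ x _ => ?_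
    rw [norm_mul, norm_mul, norm_neg]
    simp only [Real.norm_eq_abs]
    have := Real.abs_sin_le_one (s * x)
    gcongr
    nlinarith [abs_nonneg s]
  · exact (by fun_prop : Continuous fun s : ℝ => |(1 - s ^ 2) ^ m| * |s|).intervalIntegrable _ _
  · refine Eventually.of_forall fun s _ x _ => ?_
    have h1 : HasDerivAt (fun x : ℝ => s * x) s x := by simpa using (hasDerivAt_id x).const_mul s
    exact (h1.cos).const_mul _

lemma Bk_continuous (m : ℕ) : Continuous (Bk m) :=
  continuous_iff_continuousAt.2 fun u => (Bk_hasDerivAt m u).continuousAt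

lemma Bk_bound (m : ℕ) (u : ℝ) : |Bk m u| ≤ 1 := by
  have := intervalIntegral.norm_integral_le_of_norm_le_const (a := (0:ℝ)) (b := 1) (C := 1)
    (f := fun s => (1 - s ^ 2) ^ m * Real.cos (s * u)) (by
      intro s hs
      rw [Set.uIoc_of_le zero_le_one] at hs
      obtain ⟨h0, h1⟩ := hs
      have ha : |1 - s ^ 2| ≤ 1 := by rw [abs_le]; constructor <;> nlinarith
      rw [norm_mul, norm_pow]
      simp only [Real.norm_eq_abs]
      exact mul_le_one₀ (pow_le_one₀ (abs_nonneg _) ha) (abs_nonneg _) (Real.abs_cos_le_one _))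
  simpa [Bk] using this

lemma d_sin (u s : ℝ) : HasDerivAt (fun s : ℝ => Real.sin (s * u)) (Real.cos (s * u) * u) s := by
  have h1 : HasDerivAt (fun x : ℝ => x * u) u s := by simpa using (hasDerivAt_id s).mul_const u
  exact h1.sin

lemma d_cos (u s : ℝ) : HasDerivAt (fun s : ℝ => Real.cos (s * u)) (-Real.sin (s * u) * u) s := by
  have h1 : HasDerivAt (fun x : ℝ => x * u) u s := by simpa using (hasDerivAt_id s).mul_const u
  exact h1.cos

lemma d_pow (m : ℕ) (s : ℝ) : HasDerivAt (fun s : ℝ => (1 - s ^ 2) ^ (m + 1))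
    (-(2 * (m + 1) * s * (1 - s ^ 2) ^ m)) s := by
  have h1 : HasDerivAt (fun x : ℝ => 1 - x ^ 2) (-(2 * s)) s := by
    simpa using (hasDerivAt_pow 2 s).const_sub 1
  refine (h1.pow (m + 1)).congr_deriv ?_
  push_cast
  ring

lemma mul_Bk_zero (u : ℝ) : u * Bk 0 u = Real.sin u := by
  have := intervalIntegral.integral_eq_sub_of_hasDerivAt (a := (0:ℝ)) (b := 1)
    (fun s _ => d_sin u s) ((by fun_prop : Continuous fun s : ℝ =>
      Real.cos (s * u) * u).intervalIntegrable _ _)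
  rw [intervalIntegral.integral_mul_const] at this
  simp only [Bk, pow_zero, one_mul]
  rw [mul_comm, this]
  simp

lemma mul_Bk_succ (m : ℕ) (u : ℝ) : u * Bk (m + 1) u =
    ∫ s in (0:ℝ)..1, 2 * (m + 1) * s * (1 - s ^ 2) ^ m * Real.sin (s * u) := by
  have := intervalIntegral.integral_eq_sub_of_hasDerivAt (a := (0:ℝ)) (b := 1)
    (fun s _ => (d_pow m s).mul (d_sin u s)) ((by fun_prop : Continuous fun s : ℝ =>
      -(2 * (m + 1) * s * (1 - s ^ 2) ^ m) * Real.sin (s * u) +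
        (1 - s ^ 2) ^ (m + 1) * (Real.cos (s * u) * u)).intervalIntegrable _ _)
  rw [intervalIntegral.integral_add
    ((by fun_prop : Continuous fun s : ℝ =>
      -(2 * (m + 1) * s * (1 - s ^ 2) ^ m) * Real.sin (s * u)).intervalIntegrable _ _)
    ((by fun_prop : Continuous fun s : ℝ =>
      (1 - s ^ 2) ^ (m + 1) * (Real.cos (s * u) * u)).intervalIntegrable _ _)] at this
  simp only [← mul_assoc] at this
  rw [intervalIntegral.integral_mul_const] at this
  simp only [neg_mul, intervalIntegral.integral_neg, Pi.mul_apply] at this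
  simp only [Bk]
  simp only [zero_mul, Real.sin_zero, one_pow, sub_self, ne_eq, Nat.add_eq_zero_iff, one_ne_zero,
    and_false, not_false_eq_true, zero_pow, mul_zero] at this
  linarith

lemma mul_Bk_succ_bound (m : ℕ) (u : ℝ) : |u * Bk (m + 1) u| ≤ 2 * (m + 1) := by
  rw [mul_Bk_succ]
  have := intervalIntegral.norm_integral_le_of_norm_le_const (a := (0:ℝ)) (b := 1)
    (C := 2 * ((m:ℝ) + 1))
    (f := fun s => 2 * (m + 1) * s * (1 - s ^ 2) ^ m * Real.sin (s * u)) (by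
      intro s hs
      rw [Set.uIoc_of_le zero_le_one] at hs
      obtain ⟨h0, h1⟩ := hs
      have ha : |1 - s ^ 2| ≤ 1 := by rw [abs_le]; constructor <;> nlinarith
      have hb : |s| ≤ 1 := by rw [abs_le]; constructor <;> linarith
      rw [mul_assoc, mul_assoc, norm_mul, norm_mul s, norm_mul (_ ^ _), norm_pow]
      simp only [Real.norm_eq_abs]
      rw [abs_of_nonneg (by positivity : (0:ℝ) ≤ 2 * (m + 1))]
      have : |s| * (|1 - s ^ 2| ^ m * |Real.sin (s * u)|) ≤ 1 :=
        mul_le_one₀ hb (by positivity) (mul_le_one₀ (pow_le_one₀ (abs_nonneg _) ha) (abs_nonneg _)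
          (Real.abs_sin_le_one _))
      exact mul_le_of_le_one_right (by positivity) this)
  simpa using this

lemma mul_Bk_succ_deriv (m : ℕ) (u : ℝ) : HasDerivAt (fun u => u * Bk (m + 1) u)
    (2 * (m + 1) * (Bk m u - Bk (m + 1) u)) u := by
  refine ((hasDerivAt_id u).mul (Bk_hasDerivAt (m + 1) u)).congr_deriv ?_
  have := intervalIntegral.integral_eq_sub_of_hasDerivAt (a := (0:ℝ)) (b := 1)
    (f' := fun s => (1 - s ^ 2) ^ (m + 1) * Real.cos (s * u)
      + ((1 - s ^ 2) ^ (m + 1) * (-Real.sin (s * u) * s)) * u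
      - 2 * (m + 1) * ((1 - s ^ 2) ^ m * Real.cos (s * u) -
          (1 - s ^ 2) ^ (m + 1) * Real.cos (s * u)))
    (fun s _ => (((hasDerivAt_id s).mul (d_pow m s)).mul (d_cos u s)).congr_deriv (by
      simp only [Pi.mul_apply, id]
      ring)) ((by fun_prop : Continuous _).intervalIntegrable _ _)
  have c1 : IntervalIntegrable (fun s : ℝ => (1 - s ^ 2) ^ (m + 1) * Real.cos (s * u)) volume 0 1 :=
    (by fun_prop : Continuous _).intervalIntegrable _ _
  have c0 : IntervalIntegrable (fun s : ℝ => (1 - s ^ 2) ^ m * Real.cos (s * u)) volume 0 1 :=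
    (by fun_prop : Continuous _).intervalIntegrable _ _
  have c2 : IntervalIntegrable (fun s : ℝ => (1 - s ^ 2) ^ (m + 1) * (-Real.sin (s * u) * s))
    volume 0 1 := (by fun_prop : Continuous _).intervalIntegrable _ _
  rw [intervalIntegral.integral_sub (c1.add (c2.mul_const u)) ((c0.sub c1).const_mul _),
    intervalIntegral.integral_add c1 (c2.mul_const u), intervalIntegral.integral_mul_const,
    intervalIntegral.integral_const_mul, intervalIntegral.integral_sub c0 c1] at this
  simp at this
  simp only [Bk, id]
  simp
  linarith

lemma step_zero {g : ℝ → ℂ} (hg : Adm 1 g) (v : ℝ) :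
    ∫ t : ℝ, g t * (Real.cos (v * t) : ℂ) = - ∫ t : ℝ, Oop g t * (Bk 0 (t * v) : ℂ) := by
  rw [← parts_step hg (Bk_continuous 0) Real.continuous_cos (Bk_bound 0) Real.abs_cos_le_one
    (K := 1) (fun u => by rw [mul_Bk_zero]; exact Real.abs_sin_le_one u)
    (fun u => by simp only [mul_Bk_zero]; exact Real.hasDerivAt_sin u) v]
  simp only [mul_comm v]

lemma step_succ {g : ℝ → ℂ} (hg : Adm 1 g) (m : ℕ) (v : ℝ) :
    ∫ t : ℝ, g t * (Bk m (t * v) : ℂ) = (∫ t : ℝ, g t * (Bk (m + 1) (t * v) : ℂ)) +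
      (-(1 / (2 * ((m : ℂ) + 1)))) * ∫ t : ℝ, Oop g t * (Bk (m + 1) (t * v) : ℂ) := by
  have h := parts_step hg (Bk_continuous (m + 1))
    (c := fun u => 2 * (m + 1) * (Bk m u - Bk (m + 1) u))
    (continuous_const.mul ((Bk_continuous m).sub (Bk_continuous (m + 1)))) (Bk_bound (m + 1))
    (N := 2 * (m + 1) * (1 + 1))
    (fun u => by
      rw [abs_mul, abs_of_nonneg (by positivity : (0:ℝ) ≤ 2 * (m + 1))]
      gcongr
      exact (abs_sub _ _).trans (add_le_add (Bk_bound m u) (Bk_bound (m + 1) u)))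
    (mul_Bk_succ_bound m) (mul_Bk_succ_deriv m) v
  have e : (fun t : ℝ => g t * ((2 * (m + 1) * (Bk m (t * v) - Bk (m + 1) (t * v)) : ℝ) : ℂ)) =
      fun t : ℝ => (2 * ((m : ℂ) + 1)) *
        (g t * (Bk m (t * v) : ℂ) - g t * (Bk (m + 1) (t * v) : ℂ)) := by
    funext t; push_cast; ring
  rw [e, integral_const_mul, integral_sub
    (integrable_mul_kernel hg.integrable (Bk_continuous m) (Bk_bound m) v)
    (integrable_mul_kernel hg.integrable (Bk_continuous (m + 1)) (Bk_bound (m + 1)) v)] at h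
  have hm : (m : ℂ) + 1 ≠ 0 := Nat.cast_add_one_ne_zero m
  have h' := eq_neg_iff_add_eq_zero.1 h
  generalize (∫ t : ℝ, g t * (Bk m (t * v) : ℂ)) = A at *
  generalize (∫ t : ℝ, g t * (Bk (m + 1) (t * v) : ℂ)) = B at *
  generalize (∫ t : ℝ, Oop g t * (Bk (m + 1) (t * v) : ℂ)) = C at *
  field_simp
  linear_combination h'

lemma main_aux (k : ℕ) : ∃ d : ℕ → ℂ, ∀ f : ℝ → ℂ, Adm (k + 1) f → ∀ v : ℝ,
    (∫ t : ℝ, f t * (Real.cos (v * t) : ℂ)) =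
      ∑ i ∈ Finset.range (k + 1), d i * ∫ t : ℝ, Oop^[i + 1] f t * (Bk k (t * v) : ℂ) := by
  induction k with
  | zero =>
    refine ⟨fun _ => -1, fun f hf v => ?_⟩
    rw [step_zero hf v]
    simp
  | succ k ih =>
    obtain ⟨d, hd⟩ := ih
    refine ⟨fun i => (if i < k + 1 then d i else 0) +
      (if i = 0 then 0 else -(1 / (2 * ((k : ℂ) + 1))) * d (i - 1)), fun f hf v => ?_⟩
    rw [hd f (hf.mono (by omega)) v]
    have e : ∀ i ∈ Finset.range (k + 1),
        d i * ∫ t : ℝ, Oop^[i + 1] f t * (Bk k (t * v) : ℂ) =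
        d i * (∫ t : ℝ, Oop^[i + 1] f t * (Bk (k + 1) (t * v) : ℂ)) +
        -(1 / (2 * ((k : ℂ) + 1))) * d i *
          ∫ t : ℝ, Oop^[i + 1 + 1] f t * (Bk (k + 1) (t * v) : ℂ) := by
      intro i hi
      have hi := Finset.mem_range.1 hi
      rw [step_succ (Adm.iter (i + 1) (hf.mono (by omega))) k v,
        Function.iterate_succ_apply' Oop (i + 1)]
      ring
    rw [Finset.sum_congr rfl e, Finset.sum_add_distrib]
    simp only [add_mul, Finset.sum_add_distrib]
    congr 1
    · rw [Finset.sum_range_succ _ (k + 1)]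
      simp only [lt_irrefl, if_false, zero_mul, add_zero]
      refine Finset.sum_congr rfl fun i hi => ?_
      rw [if_pos (Finset.mem_range.1 hi)]
    · rw [Finset.sum_range_succ' _ (k + 1)]
      simp

theorem stmt0 (k : ℕ) (hk : 0 < k) :
    ∃ c : ℕ → ℂ, ∀ f : ℝ → ℂ, ContDiff ℝ (k + 1 : ℕ) f →
      (∀ ℓ : ℕ, ℓ ≤ k + 1 →
        Integrable (fun t : ℝ => (t : ℂ) ^ ℓ * iteratedDeriv ℓ f t)) →
      (∀ ℓ : ℕ, ℓ ≤ k + 1 →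
        Tendsto (fun t : ℝ => (t : ℂ) ^ ℓ * iteratedDeriv ℓ f t) (cocompact ℝ) (nhds 0)) →
      ∀ v : ℝ,
        (∫ t : ℝ, f t * (Real.cos (v * t) : ℂ)) =
          ∑ j ∈ Finset.Icc 1 (k + 1), c j * ∫ t : ℝ, Oop^[j] f t * (Bk k (t * v) : ℂ) := by
  obtain ⟨d, hd⟩ := main_aux k
  refine ⟨fun j => d (j - 1), fun f h1 h2 h3 v => ?_⟩
  rw [hd f ⟨h1, h2, h3⟩ v, ← Finset.Ico_succ_right_eq_Icc, Finset.sum_Ico_eq_sum_range]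
  refine Finset.sum_congr (by simp) fun i _ => ?_
  rw [add_comm 1 i]
  simp
end
end

section
/- Let k be a nonnegative integer and C ≥ 0. Let T be an even tempered distribution on ℝ, i.e. a continuous linear functional on the Schwartz space 𝒮(ℝ) satisfying T(φ(−·)) = T(φ) for all φ ∈ 𝒮(ℝ), and suppose the Fourier transform of T is a function of class C^{k+2} satisfying a Mihlin condition of order k+2: there is a C^{k+2} function g : ℝ → ℂ with |g^{(j)}(ζ)| ≤ C (1+|ζ|)^{−j} for all ζ ∈ ℝ and 0 ≤ j ≤ k+2, such that T(φ̂) = ∫_ℝ g(ζ) φ(ζ) dζ for all φ ∈ 𝒮(ℝ). Then there is a constant C″, depending only on k, such that for each ℓ ∈ {0, 1, …, k} there exists a measurable function h_ℓ : ℝ → ℂ with ‖h_ℓ‖_{L^∞} ≤ C″·C and T(A^ℓ(t φ(t))) = ∫_ℝ h_ℓ(t) φ(t) dt for all φ ∈ 𝒮(ℝ); that is, the tempered distribution t · O^ℓ T is given by a bounded function with sup norm at most C″·C. (This is Lemma 5.3(i) of the paper.) -/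
open MeasureTheory Filter

noncomputable section

/-- The operator `(A ψ)(t) = -(t ψ(t))' = -ψ(t) - t ψ'(t)`, the (negative) formal adjoint of
`(O f)(t) = t f'(t)`. -/
def Aop : (ℝ → ℂ) → (ℝ → ℂ) := fun ψ t => -ψ t - (t : ℂ) * deriv ψ t


structure Mih (n : ℕ) (C : ℝ) (f : ℝ → ℂ) : Prop where
  cd : ContDiff ℝ n f
  bd : ∀ x : ℝ, ∀ j : ℕ, j ≤ n → ‖iteratedDeriv j f x‖ ≤ C / (1 + |x|) ^ j

def Dx (f : ℝ → ℂ) : ℝ → ℂ := fun x => -(f x + (x : ℂ) * deriv f x)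

lemma Dx_iter (n : ℕ) (f : ℝ → ℂ) (hf : ContDiff ℝ (n + 1 : ℕ) f) :
    ∀ j ≤ n, iteratedDeriv j (Dx f) =
      fun x => -((j + 1 : ℂ) * iteratedDeriv j f x + (x : ℂ) * iteratedDeriv (j + 1) f x) := by
  intro j
  induction j with
  | zero => intro _; ext x; simp [Dx, iteratedDeriv_one]
  | succ j ih =>
    intro hj
    rw [iteratedDeriv_succ, ih (by omega)]
    ext x
    have h1 : HasDerivAt (iteratedDeriv j f) (iteratedDeriv (j + 1) f x) x := by
      rw [iteratedDeriv_succ]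
      exact ((hf.differentiable_iteratedDeriv j (by exact_mod_cast (by omega))) x).hasDerivAt
    have h2 : HasDerivAt (iteratedDeriv (j + 1) f) (iteratedDeriv (j + 1 + 1) f x) x := by
      rw [iteratedDeriv_succ (n := j + 1)]
      exact ((hf.differentiable_iteratedDeriv (j + 1) (by exact_mod_cast (by omega))) x).hasDerivAt
    have h3 : HasDerivAt (fun x : ℝ => (x : ℂ)) 1 x := Complex.ofRealCLM.hasDerivAt
    have := ((h1.const_mul ((j : ℂ) + 1)).add (h3.mul h2)).neg
    have h4 := this.deriv
    refine Eq.trans ?_ (h4.trans ?_)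
    · rfl
    · push_cast; ring

lemma Mih.Dx {n : ℕ} {C : ℝ} {f : ℝ → ℂ} (hf : Mih (n + 1) C f) : Mih n ((n + 2) * C) (Dx f) := by
  refine ⟨?_, ?_⟩
  · have h1 : ContDiff ℝ n (deriv f) := by
      have := hf.cd
      push_cast at this
      exact (contDiff_succ_iff_deriv.1 this).2.2
    have h2 : ContDiff ℝ n f := hf.cd.of_le (by exact_mod_cast (by omega))
    have h3 : ContDiff ℝ n (fun x : ℝ => (x : ℂ)) := Complex.ofRealCLM.contDiff
    exact (h2.add (h3.mul h1)).neg
  · intro x j hj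
    rw [Dx_iter n f hf.cd j hj]
    have hp : 0 < 1 + |x| := by positivity
    have hb1 := hf.bd x j (by omega)
    have hb2 := hf.bd x (j + 1) (by omega)
    have hC : 0 ≤ C := by
      have := (norm_nonneg _).trans (hf.bd x 0 (by omega)); simpa using this
    have hx : |x| * (C / (1 + |x|) ^ (j + 1)) ≤ C / (1 + |x|) ^ j := by
      rw [pow_succ, mul_div_assoc', div_le_div_iff₀ (by positivity) (by positivity)]
      have : 0 ≤ C * (1 + |x|) ^ j := by positivity
      nlinarith
    have hjn : (j : ℝ) ≤ n := by exact_mod_cast hj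
    calc _ ≤ (j + 1) * (C / (1 + |x|) ^ j) + |x| * (C / (1 + |x|) ^ (j + 1)) := by
          rw [norm_neg]
          refine (norm_add_le _ _).trans ?_
          rw [norm_mul, norm_mul, Complex.norm_real, Real.norm_eq_abs]
          have : ‖(j : ℂ) + 1‖ = j + 1 := by exact_mod_cast Complex.norm_natCast (j + 1)
          rw [this]
          gcongr
      _ ≤ (n + 1) * (C / (1 + |x|) ^ j) + C / (1 + |x|) ^ j := by gcongr
      _ = _ := by ring

lemma Mih.mono {n m : ℕ} {C D : ℝ} {f : ℝ → ℂ} (hf : Mih n C f) (hm : m ≤ n) (hC : C ≤ D) :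
    Mih m D f :=
  ⟨hf.cd.of_le (by exact_mod_cast hm), fun x j hj =>
    (hf.bd x j (hj.trans hm)).trans (by gcongr)⟩

lemma Mih.nonneg {n : ℕ} {C : ℝ} {f : ℝ → ℂ} (hf : Mih n C f) : 0 ≤ C := by
  have := (norm_nonneg _).trans (hf.bd 0 0 (by omega)); simpa using this

lemma Mih.iter {k : ℕ} {C : ℝ} {f : ℝ → ℂ} (hf : Mih (k + 2) C f) :
    ∀ l ≤ k, Mih (k + 2 - l) ((k + 4) ^ l * C) (_root_.Dx^[l] f) := by
  intro l
  induction l with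
  | zero => intro _; simpa using hf
  | succ l ih =>
    intro hl
    rw [Function.iterate_succ_apply']
    have h := ih (by omega)
    have e : k + 2 - l = (k + 2 - (l + 1)) + 1 := by omega
    rw [e] at h
    refine h.Dx.mono le_rfl ?_
    have hC := hf.nonneg
    have h3 : ((k + 2 - (l + 1) : ℕ) : ℝ) + 2 ≤ k + 4 := by
      have : k + 2 - (l + 1) + 2 ≤ k + 4 := by omega
      exact_mod_cast this
    calc _ ≤ ((k : ℝ) + 4) * ((k + 4) ^ l * C) := mul_le_mul_of_nonneg_right h3 (by positivity)
      _ = _ := by ring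

lemma deriv_even {f : ℝ → ℂ} (hf : ∀ x, f (-x) = f x) (x : ℝ) : deriv f (-x) = - deriv f x := by
  have : (fun x => f (-x)) = f := funext hf
  have h2 := deriv_comp_neg f x
  rw [this] at h2
  rw [h2, neg_neg]

lemma Dx_even {f : ℝ → ℂ} (hf : ∀ x, f (-x) = f x) (x : ℝ) : Dx f (-x) = Dx f x := by
  simp [Dx, deriv_even hf, hf]

lemma Dx_iter_even {f : ℝ → ℂ} (hf : ∀ x, f (-x) = f x) (l : ℕ) :
    ∀ x, Dx^[l] f (-x) = Dx^[l] f x := by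
  induction l with
  | zero => exact hf
  | succ l ih => rw [Function.iterate_succ_apply']; exact Dx_even ih

lemma Mih.evenPart {n : ℕ} {C : ℝ} {f : ℝ → ℂ} (hf : Mih n C f) :
    Mih n C (fun x => (1 / 2 : ℂ) • (f x + f (-x))) := by
  have h1 : ContDiff ℝ n (fun x => f (-x)) := hf.cd.comp contDiff_neg
  refine ⟨(hf.cd.add h1).const_smul _, fun x j hj => ?_⟩
  have hjn : ((j : ℕ) : WithTop ℕ∞) ≤ n := by exact_mod_cast hj
  have e : iteratedDeriv j (fun x => (1 / 2 : ℂ) • (f x + f (-x))) x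
      = (1 / 2 : ℂ) • (iteratedDeriv j f x + (-1 : ℝ) ^ j • iteratedDeriv j f (-x)) := by
    have a1 := iteratedDeriv_const_smul (n := j) (x := x) (f := fun x => f x + f (-x))
      (((hf.cd.add h1).of_le hjn).contDiffAt) (1 / 2 : ℂ)
    have a2 := iteratedDeriv_fun_add (n := j) (x := x) (f := f) (g := fun x => f (-x))
      ((hf.cd.of_le hjn).contDiffAt) ((h1.of_le hjn).contDiffAt)
    rw [iteratedDeriv_comp_neg] at a2
    rw [← a2]
    exact a1
  rw [e]
  have b1 := hf.bd x j hj
  have b2 := hf.bd (-x) j hj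
  rw [abs_neg] at b2
  have := norm_add_le (iteratedDeriv j f x) ((-1 : ℝ) ^ j • iteratedDeriv j f (-x))
  rw [norm_smul ((-1 : ℝ) ^ j)] at this
  rw [norm_smul]
  simp only [norm_pow, norm_neg, norm_one, one_pow, one_mul] at this
  have h5 : ‖(1 / 2 : ℂ)‖ = 1 / 2 := by norm_num
  rw [h5]
  linarith


open FourierTransform

def FT (f : ℝ → ℂ) (ξ : ℝ) : ℂ := ∫ x : ℝ, f x * Complex.exp (-(Complex.I * ξ * x))

def Xop (η : SchwartzMap ℝ ℂ) : SchwartzMap ℝ ℂ :=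
  SchwartzMap.smulLeftCLM ℂ (fun x : ℝ => (x : ℂ)) η

lemma Xop_apply (η : SchwartzMap ℝ ℂ) (x : ℝ) : Xop η x = (x : ℂ) * η x := by
  unfold Xop
  rw [SchwartzMap.smulLeftCLM_apply_apply (by fun_prop), smul_eq_mul]

def Dop (η : SchwartzMap ℝ ℂ) : SchwartzMap ℝ ℂ := SchwartzMap.derivCLM ℂ ℂ η

lemma Dop_apply (η : SchwartzMap ℝ ℂ) (x : ℝ) : Dop η x = deriv η x := rfl

def Bop (η : SchwartzMap ℝ ℂ) : SchwartzMap ℝ ℂ := Xop (Dop η)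

lemma FT_eq (f : ℝ → ℂ) (ξ : ℝ) : FT f ξ = 𝓕 f (ξ / (2 * Real.pi)) := by
  rw [Real.fourier_real_eq_integral_exp_smul, FT]
  congr 1; ext x
  rw [smul_eq_mul, mul_comm]
  congr 2
  have : (Real.pi : ℂ) ≠ 0 := by exact_mod_cast Real.pi_ne_zero
  push_cast
  field_simp

lemma FT_Dop (η : SchwartzMap ℝ ℂ) (ξ : ℝ) : FT (Dop η) ξ = Complex.I * ξ * FT η ξ := by
  have h := Real.fourier_deriv η.integrable η.differentiable (Dop η).integrable
  rw [FT_eq, FT_eq]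
  have h2 := congrFun h (ξ / (2 * Real.pi))
  refine h2.trans ?_
  have : (Real.pi : ℂ) ≠ 0 := by exact_mod_cast Real.pi_ne_zero
  rw [smul_eq_mul]
  push_cast
  field_simp

lemma FT_const_mul (c : ℂ) (f : ℝ → ℂ) (ξ : ℝ) : FT (fun x => c * f x) ξ = c * FT f ξ := by
  unfold FT
  rw [← integral_const_mul]
  congr 1; ext x; ring

lemma FT_int (η : SchwartzMap ℝ ℂ) (ξ : ℝ) :
    Integrable (fun x : ℝ => η x * Complex.exp (-(Complex.I * ξ * x))) := by
  refine η.integrable.mul_bdd (c := 1) (by fun_prop) (Eventually.of_forall fun x => ?_)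
  have : -(Complex.I * ξ * x) = ((-(ξ * x) : ℝ) : ℂ) * Complex.I := by push_cast; ring
  rw [this, Complex.norm_exp_ofReal_mul_I]

lemma FT_add (η ζ : SchwartzMap ℝ ℂ) (ξ : ℝ) : FT (η + ζ : SchwartzMap ℝ ℂ) ξ = FT η ξ + FT ζ ξ := by
  unfold FT
  rw [← integral_add (FT_int η ξ) (FT_int ζ ξ)]
  congr 1; ext x; simp; ring

lemma FT_hasDerivAt (η : SchwartzMap ℝ ℂ) (ξ : ℝ) :
    HasDerivAt (FT η) (-Complex.I * FT (Xop η) ξ) ξ := by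
  have hx : Integrable (fun x : ℝ => x • η x) := by
    refine (Xop η).integrable.congr (Eventually.of_forall fun x => ?_)
    simp [Xop_apply]
  have h := Real.hasDerivAt_fourier η.integrable hx (ξ / (2 * Real.pi))
  have h2 := h.scomp ξ ((hasDerivAt_id ξ).div_const (2 * Real.pi))
  have e : FT η = 𝓕 (η : ℝ → ℂ) ∘ (fun ξ => id ξ / (2 * Real.pi)) := by
    ext ξ; rw [FT_eq]; rfl
  rw [e]
  convert! h2 using 1
  have e2 : (fun x : ℝ => (-2 * Real.pi * Complex.I * x : ℂ) • η x)
      = fun x : ℝ => (-2 * Real.pi * Complex.I : ℂ) * Xop η x := by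
    ext x; rw [Xop_apply, smul_eq_mul]; ring
  rw [e2, ← FT_eq, FT_const_mul]
  have : (Real.pi : ℂ) ≠ 0 := by exact_mod_cast Real.pi_ne_zero
  simp
  field_simp

lemma Dop_Xop (η : SchwartzMap ℝ ℂ) : Dop (Xop η) = η + Bop η := by
  ext x
  have h : HasDerivAt (fun x : ℝ => (x : ℂ) * η x) (1 * η x + (x : ℂ) * deriv η x) x :=
    (Complex.ofRealCLM.hasDerivAt).mul (η.differentiable x).hasDerivAt
  have e : (Xop η : ℝ → ℂ) = fun x : ℝ => (x : ℂ) * η x := funext (Xop_apply η)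
  rw [Dop_apply, e, h.deriv]
  simp [Bop, Xop_apply, Dop_apply]

lemma Aop_FT (η : SchwartzMap ℝ ℂ) : Aop (FT η) = FT (Bop η) := by
  ext ξ
  unfold Aop
  rw [(FT_hasDerivAt η ξ).deriv]
  have h := FT_Dop (Xop η) ξ
  rw [Dop_Xop, FT_add] at h
  linear_combination -h

lemma Aop_iter_FT (l : ℕ) (η : SchwartzMap ℝ ℂ) : Aop^[l] (FT η) = FT (Bop^[l] η) := by
  induction l generalizing η with
  | zero => rfl
  | succ l ih => rw [Function.iterate_succ_apply, Function.iterate_succ_apply, Aop_FT, ih]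

lemma FT_inv (φ : SchwartzMap ℝ ℂ) : ∃ ψ : SchwartzMap ℝ ℂ, (∀ ξ, φ ξ = FT ψ ξ) ∧
    ∀ x : ℝ, ψ x = (1 / (2 * Real.pi) : ℂ) * ∫ t : ℝ, φ t * Complex.exp (Complex.I * x * t) := by
  have hpi : (2 * Real.pi) ≠ 0 := by positivity
  let e : ℝ ≃L[ℝ] ℝ := ContinuousLinearEquiv.unitsEquivAut ℝ (Units.mk0 (2 * Real.pi)⁻¹ (inv_ne_zero hpi))
  have he : ∀ x, e x = x / (2 * Real.pi) := by intro x; simp [e]; ring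
  let ψ : SchwartzMap ℝ ℂ := (1 / (2 * Real.pi) : ℂ) •
    SchwartzMap.compCLMOfContinuousLinearEquiv ℂ e (𝓕⁻ φ)
  have hψ : ∀ x, ψ x = (1 / (2 * Real.pi) : ℂ) * (𝓕⁻ φ) (x / (2 * Real.pi)) := by
    intro x; simp [ψ, he]
  refine ⟨ψ, ?_, ?_⟩
  · intro ξ
    have h1 : φ ξ = 𝓕 ((𝓕⁻ φ : SchwartzMap ℝ ℂ) : ℝ → ℂ) ξ := by
      rw [← SchwartzMap.fourier_coe, FourierTransform.fourier_fourierInv_eq]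
    rw [h1, Real.fourier_real_eq_integral_exp_smul, FT]
    have h2 := Measure.integral_comp_div (fun v : ℝ => Complex.exp (↑(-2 * Real.pi * v * ξ) * Complex.I) • (𝓕⁻ φ : SchwartzMap ℝ ℂ) v) (2 * Real.pi)
    rw [abs_of_pos (by positivity)] at h2
    have h3 : (∫ v : ℝ, Complex.exp (↑(-2 * Real.pi * v * ξ) * Complex.I) • (𝓕⁻ φ : SchwartzMap ℝ ℂ) v)
      = (1 / (2 * Real.pi) : ℂ) * ∫ x : ℝ, Complex.exp (↑(-2 * Real.pi * (x / (2 * Real.pi)) * ξ) * Complex.I) • (𝓕⁻ φ : SchwartzMap ℝ ℂ) (x / (2 * Real.pi)) := by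
      rw [h2]
      have : (Real.pi : ℂ) ≠ 0 := by exact_mod_cast Real.pi_ne_zero
      have h9 : (1 / (2 * Real.pi) : ℂ) * ((2 * Real.pi : ℝ) : ℂ) = 1 := by
        push_cast
        field_simp
      rw [Complex.real_smul, ← mul_assoc, h9, one_mul]
    rw [h3, ← integral_const_mul]
    congr 1; ext x
    rw [hψ, smul_eq_mul]
    have e3 : (-2 * Real.pi * (x / (2 * Real.pi)) * ξ) = -(ξ * x) := by field_simp
    rw [e3]
    have e4 : ((-(ξ * x) : ℝ) : ℂ) * Complex.I = -(Complex.I * ξ * x) := by push_cast; ring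
    rw [e4]; ring
  · intro x
    rw [hψ, SchwartzMap.fourierInv_coe, Real.fourierInv_eq_fourier_neg,
      Real.fourier_real_eq_integral_exp_smul]
    congr 2; ext t
    rw [smul_eq_mul, mul_comm]
    congr 2
    have : (Real.pi : ℂ) ≠ 0 := by exact_mod_cast Real.pi_ne_zero
    push_cast
    field_simp

structure Osc (C : ℝ) (G G' : ℝ → ℂ) : Prop where
  hd : ∀ x, HasDerivAt G (G' x) x
  hc : Continuous G'
  b0 : ∀ x, ‖G x‖ ≤ C / (1 + |x|)
  b1 : ∀ x, ‖G' x‖ ≤ C / (1 + |x|) ^ 2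

lemma Osc.cont {C : ℝ} {G G' : ℝ → ℂ} (h : Osc C G G') : Continuous G :=
  continuous_iff_continuousAt.2 fun x => (h.hd x).continuousAt

lemma Osc.nonneg {C : ℝ} {G G' : ℝ → ℂ} (h : Osc C G G') : 0 ≤ C := by
  simpa using (norm_nonneg _).trans (h.b0 0)

lemma Osc.ibp {C : ℝ} {G G' : ℝ → ℂ} (h : Osc C G G') {t : ℝ} (ht : t ≠ 0) (a b : ℝ) :
    ∫ x in a..b, G x * (Real.sin (x * t) : ℂ) =
      (1 / t : ℂ) * (G a * (Real.cos (a * t) : ℂ) - G b * (Real.cos (b * t) : ℂ)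
        + ∫ x in a..b, G' x * (Real.cos (x * t) : ℂ)) := by
  have htc : (t : ℂ) ≠ 0 := by exact_mod_cast ht
  have hv : ∀ x : ℝ, HasDerivAt (fun x : ℝ => -(1 / t : ℂ) * (Real.cos (x * t) : ℂ))
      (Real.sin (x * t) : ℂ) x := by
    intro x
    have h1 : HasDerivAt (fun x : ℝ => Real.cos (x * t)) (-Real.sin (x * t) * (1 * t)) x :=
      ((hasDerivAt_id x).mul_const t).cos
    have h2 := (h1.ofReal_comp).const_mul (-(1 / t : ℂ))
    convert! h2 using 1
    push_cast
    field_simp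
  rw [intervalIntegral.integral_mul_deriv_eq_deriv_mul (fun x _ => h.hd x) (fun x _ => hv x)
    (h.hc.intervalIntegrable _ _)
    (Continuous.intervalIntegrable (by fun_prop) _ _)]
  have e : ∀ x : ℝ, G' x * (-(1 / t : ℂ) * (Real.cos (x * t) : ℂ))
      = -(1 / t : ℂ) * (G' x * (Real.cos (x * t) : ℂ)) := by intro x; ring
  simp_rw [e]
  rw [intervalIntegral.integral_const_mul]
  ring

lemma Osc.bound_tail {C : ℝ} {G G' : ℝ → ℂ} (h : Osc C G G') {t : ℝ} (ht : t ≠ 0) {b : ℝ}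
    (hb : |t|⁻¹ ≤ b) : ‖∫ x in (|t|⁻¹)..b, G x * (Real.sin (x * t) : ℂ)‖ ≤ 2 * C := by
  have ht' : 0 < |t| := abs_pos.2 ht
  set a := |t|⁻¹ with ha
  have hapos : 0 < a := by positivity
  have hC := h.nonneg
  rw [h.ibp ht]
  have hcos : ∀ x : ℝ, ‖(Real.cos x : ℂ)‖ ≤ 1 := fun x => by
    rw [Complex.norm_real]; exact Real.abs_cos_le_one x
  have i1 : ‖∫ x in a..b, G' x * (Real.cos (x * t) : ℂ)‖ ≤ C / (1 + a) - C / (1 + b) := by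
    have hFTC : ∫ x in a..b, C / (1 + x) ^ 2 = C / (1 + a) - C / (1 + b) := by
      rw [intervalIntegral.integral_eq_sub_of_hasDerivAt (f := fun x => - (C / (1 + x)))]
      · ring
      · intro x hx
        rw [Set.uIcc_of_le hb] at hx
        have : 1 + x ≠ 0 := by linarith [hx.1]
        have h1 := (((hasDerivAt_id x).const_add 1).inv this).const_mul C |>.neg
        convert! h1 using 1
        simp; ring
      · apply ContinuousOn.intervalIntegrable
        rw [Set.uIcc_of_le hb]
        apply ContinuousOn.div (by fun_prop) (by fun_prop)
        intro x hx
        have : 1 + x ≠ 0 := by linarith [hx.1]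
        positivity
    rw [← hFTC]
    apply intervalIntegral.norm_integral_le_of_norm_le hb
    · refine Eventually.of_forall fun x hx => ?_
      rw [norm_mul]
      have := h.b1 x
      rw [abs_of_pos (hapos.trans hx.1)] at this
      calc _ ≤ C / (1 + x) ^ 2 * 1 := by gcongr; exact hcos _
        _ = _ := mul_one _
    · apply ContinuousOn.intervalIntegrable
      rw [Set.uIcc_of_le hb]
      apply ContinuousOn.div (by fun_prop) (by fun_prop)
      intro x hx
      have : 1 + x ≠ 0 := by linarith [hx.1]
      positivity
  have i2 : ∀ x, 0 < x → ‖G x * (Real.cos (x * t) : ℂ)‖ ≤ C / (1 + x) := by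
    intro x hx
    have := h.b0 x
    rw [abs_of_pos hx] at this
    rw [norm_mul]
    calc _ ≤ C / (1 + x) * 1 := by gcongr; exact hcos _
      _ = _ := mul_one _
  have i3 := i2 a hapos
  have i4 := i2 b (hapos.trans_le hb)
  have i5 : ‖(1 / t : ℂ)‖ = a := by simp [ha]
  rw [norm_mul, i5]
  have i6 := norm_add_le (G a * (Real.cos (a * t) : ℂ) - G b * (Real.cos (b * t) : ℂ))
    (∫ x in a..b, G' x * (Real.cos (x * t) : ℂ))
  have i7 := norm_sub_le (G a * (Real.cos (a * t) : ℂ)) (G b * (Real.cos (b * t) : ℂ))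
  calc _ ≤ a * (2 * (C / (1 + a))) := by gcongr; linarith
    _ = 2 * (C * (a / (1 + a))) := by ring
    _ ≤ 2 * (C * 1) := by
      gcongr
      rw [div_le_one (by positivity)]; linarith
    _ = _ := by ring

lemma Osc.bound_head {C : ℝ} {G G' : ℝ → ℂ} (h : Osc C G G') {t : ℝ} {b : ℝ} (hb0 : 0 ≤ b)
    (hb : b * |t| ≤ 1) : ‖∫ x in (0:ℝ)..b, G x * (Real.sin (x * t) : ℂ)‖ ≤ C := by
  have hC := h.nonneg
  have := intervalIntegral.norm_integral_le_of_norm_le_const (a := 0) (b := b) (C := C * |t|)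
    (f := fun x => G x * (Real.sin (x * t) : ℂ)) ?_
  · refine this.trans ?_
    rw [sub_zero, abs_of_nonneg hb0]
    nlinarith
  · intro x hx
    rw [Set.uIoc_of_le hb0] at hx
    rw [norm_mul, Complex.norm_real, Real.norm_eq_abs]
    have h1 := h.b0 x
    have h2 : |Real.sin (x * t)| ≤ |x * t| := Real.abs_sin_le_abs
    rw [abs_mul] at h2
    have hx0 : |x| = x := abs_of_pos hx.1
    rw [hx0] at h1 h2
    have hx1 := hx.1
    calc _ ≤ C / (1 + x) * (x * |t|) := by gcongr
      _ = C * |t| * (x / (1 + x)) := by ring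
      _ ≤ C * |t| * 1 := by
        gcongr
        rw [div_le_one (by positivity)]; linarith
      _ = _ := mul_one _

lemma Osc.bound {C : ℝ} {G G' : ℝ → ℂ} (h : Osc C G G') (t : ℝ) {b : ℝ} (hb : 0 ≤ b) :
    ‖∫ x in (0:ℝ)..b, G x * (Real.sin (x * t) : ℂ)‖ ≤ 3 * C := by
  have hC := h.nonneg
  by_cases hbt : b * |t| ≤ 1
  · linarith [h.bound_head hb hbt]
  · have ht : t ≠ 0 := by
      rintro rfl; simp at hbt
    have ht' : 0 < |t| := abs_pos.2 ht
    have hb2 : |t|⁻¹ ≤ b := by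
      rw [inv_le_iff_one_le_mul₀ ht']; linarith
    have hcont : Continuous (fun x => G x * (Real.sin (x * t) : ℂ)) := by
      have := h.cont
      fun_prop
    rw [← intervalIntegral.integral_add_adjacent_intervals (b := |t|⁻¹)
      (hcont.intervalIntegrable _ _) (hcont.intervalIntegrable _ _)]
    have h1 := h.bound_head (t := t) (b := |t|⁻¹) (by positivity) (by rw [inv_mul_cancel₀ ht'.ne'])
    have h2 := h.bound_tail ht hb2
    linarith [norm_add_le (∫ x in (0:ℝ)..|t|⁻¹, G x * (Real.sin (x * t) : ℂ))
      (∫ x in (|t|⁻¹)..b, G x * (Real.sin (x * t) : ℂ))]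

lemma Osc.int' {C : ℝ} {G G' : ℝ → ℂ} (h : Osc C G G') : Integrable G' := by
  have hC := h.nonneg
  refine (integrable_inv_one_add_sq.const_mul C).mono' h.hc.aestronglyMeasurable
    (Eventually.of_forall fun x => (h.b1 x).trans ?_)
  rw [div_eq_mul_inv]
  gcongr
  nlinarith [abs_nonneg x, sq_abs x]

lemma Osc.lim {C : ℝ} {G G' : ℝ → ℂ} (h : Osc C G G') (t : ℝ) :
    ∃ l : ℂ, Tendsto (fun n : ℕ => ∫ x in (0:ℝ)..n, G x * (Real.sin (x * t) : ℂ)) atTop (nhds l) := by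
  by_cases ht : t = 0
  · subst ht; refine ⟨0, ?_⟩; simp
  simp_rw [h.ibp ht]
  refine ⟨_, Tendsto.const_mul _ (Tendsto.add (Tendsto.sub tendsto_const_nhds
    (b := (0 : ℂ)) ?_) (intervalIntegral_tendsto_integral_Ioi 0 ?_ tendsto_natCast_atTop_atTop))⟩
  · have hlim : Tendsto (fun n : ℕ => C / (1 + (n : ℝ))) atTop (nhds 0) :=
      Tendsto.const_div_atTop (tendsto_atTop_add_const_left _ _ tendsto_natCast_atTop_atTop) C
    refine squeeze_zero_norm (fun n => ?_) hlim
    have := h.b0 n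
    rw [Nat.abs_cast] at this
    rw [norm_mul, Complex.norm_real]
    calc _ ≤ C / (1 + n) * 1 := by
          have hn : 0 ≤ C / (1 + (n : ℝ)) := (norm_nonneg _).trans this
          exact mul_le_mul this (Real.abs_cos_le_one _) (norm_nonneg _) hn
      _ = _ := mul_one _
  · refine (h.int'.mul_bdd (c := 1) ?_ (Eventually.of_forall fun x => ?_)).integrableOn
    · exact Continuous.aestronglyMeasurable (by fun_prop)
    · rw [Complex.norm_real]; exact Real.abs_cos_le_one _

lemma Osc.rep {C : ℝ} {G G' : ℝ → ℂ} (h : Osc C G G') (hodd : ∀ x, G (-x) = -G x) :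
    ∃ H : ℝ → ℂ, Measurable H ∧ (∀ t, ‖H t‖ ≤ C) ∧ ∀ φ ψ : SchwartzMap ℝ ℂ,
      (∀ x : ℝ, ψ x = (1 / (2 * Real.pi) : ℂ) * ∫ t : ℝ, φ t * Complex.exp (Complex.I * x * t)) →
      ∫ x : ℝ, G x * ψ x = ∫ t : ℝ, H t * φ t := by
  have hC := h.nonneg
  have hGc := h.cont
  have hpi : (Real.pi : ℂ) ≠ 0 := by exact_mod_cast Real.pi_ne_zero
  choose l hl using h.lim
  let S : ℕ → ℝ → ℂ := fun n t =>
    (Complex.I / Real.pi) * ∫ x in (0:ℝ)..n, G x * (Real.sin (x * t) : ℂ)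
  let H : ℝ → ℂ := fun t => (Complex.I / Real.pi) * l t
  have hS : ∀ t, Tendsto (fun n => S n t) atTop (nhds (H t)) := fun t => (hl t).const_mul _
  have hScont : ∀ n, Continuous (S n) := by
    intro n
    refine continuous_const.mul ?_
    refine intervalIntegral.continuous_parametric_intervalIntegral_of_continuous' ?_ _ _
    fun_prop
  have hSb : ∀ n t, ‖S n t‖ ≤ C := by
    intro n t
    have h1 := h.bound t (b := n) (by positivity)
    have h2 : ‖(Complex.I / Real.pi : ℂ)‖ = 1 / Real.pi := by
      rw [norm_div, Complex.norm_I, Complex.norm_real, Real.norm_of_nonneg Real.pi_pos.le]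
    calc ‖S n t‖ = 1 / Real.pi * ‖∫ x in (0:ℝ)..n, G x * (Real.sin (x * t) : ℂ)‖ := by
          rw [← h2, ← norm_mul]
      _ ≤ 1 / Real.pi * (3 * C) := by gcongr
      _ = C * (3 / Real.pi) := by ring
      _ ≤ C * 1 := by
        gcongr
        rw [div_le_one Real.pi_pos]; exact Real.pi_gt_three.le
      _ = C := mul_one _
  have hHm : Measurable H :=
    measurable_of_tendsto_metrizable (fun n => (hScont n).measurable) (tendsto_pi_nhds.2 hS)
  refine ⟨H, hHm, fun t => le_of_tendsto (hS t).norm (Eventually.of_forall fun n => hSb n t), ?_⟩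
  intro φ ψ hψ
  have hGb : ∀ x, ‖G x‖ ≤ C := fun x => (h.b0 x).trans
    (div_le_self hC (by linarith [abs_nonneg x]))
  -- first limit
  have L1 : Tendsto (fun n : ℕ => ∫ t : ℝ, S n t * φ t) atTop (nhds (∫ t : ℝ, H t * φ t)) := by
    refine tendsto_integral_of_dominated_convergence (fun t => C * ‖φ t‖) ?_ ?_ ?_ ?_
    · intro n
      exact ((hScont n).mul φ.continuous).aestronglyMeasurable
    · exact φ.integrable.norm.const_mul C
    · intro n
      refine Eventually.of_forall fun t => ?_
      rw [norm_mul]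
      gcongr
      exact hSb n t
    · exact Eventually.of_forall fun t => (hS t).mul_const _
  have hGψ : Integrable (fun x => G x * ψ x) :=
    ψ.integrable.bdd_mul (c := C) hGc.aestronglyMeasurable (Eventually.of_forall hGb)
  have hsin : ∀ x : ℝ, (Complex.I / Real.pi : ℂ) * ∫ t : ℝ, (Real.sin (x * t) : ℂ) * φ t
      = ψ x - ψ (-x) := by
    intro x
    rw [hψ x, hψ (-x), ← mul_sub]
    have hintg : ∀ y : ℝ, Integrable (fun t : ℝ => φ t * Complex.exp (Complex.I * y * t)) := by
      intro y
      have := FT_int φ (-y)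
      refine this.congr (Eventually.of_forall fun t => ?_)
      simp
    rw [← integral_sub (hintg x) (hintg (-x)), ← integral_const_mul, ← integral_const_mul]
    congr 1; ext t
    have : (Real.sin (x * t) : ℂ) = (Complex.exp (-(x * t : ℂ) * Complex.I)
        - Complex.exp ((x * t : ℂ) * Complex.I)) * Complex.I / 2 := by
      rw [Complex.ofReal_sin]; push_cast; rfl
    rw [this]
    have e1 : Complex.I * x * t = (x * t : ℂ) * Complex.I := by ring
    have e2 : Complex.I * (-x : ℝ) * t = -(x * t : ℂ) * Complex.I := by push_cast; ring
    rw [e1, e2]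
    generalize Complex.exp (-(x * t : ℂ) * Complex.I) = E1
    generalize Complex.exp ((x * t : ℂ) * Complex.I) = E2
    field_simp
    linear_combination φ t * (E1 - E2) * Complex.I_sq
  have L2 : ∀ n : ℕ, ∫ t : ℝ, S n t * φ t = ∫ x in (0:ℝ)..n, (G x * ψ x + G (-x) * ψ (-x)) := by
    intro n
    have hn : (0:ℝ) ≤ n := by positivity
    rw [intervalIntegral.integral_of_le hn]
    have hprod : Integrable (Function.uncurry fun (t x : ℝ) =>
        (Complex.I / Real.pi : ℂ) * (G x * (Real.sin (x * t) : ℂ) * φ t))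
        (volume.prod (volume.restrict (Set.Ioc (0:ℝ) n))) := by
      have hG : Integrable G (volume.restrict (Set.Ioc (0:ℝ) n)) :=
        (hGc.intervalIntegrable 0 n).1
      have := ((φ.integrable (μ := volume)).mul_prod hG).norm.const_mul ‖(Complex.I / Real.pi : ℂ)‖
      refine this.mono' ?_ (Eventually.of_forall ?_)
      · apply Continuous.aestronglyMeasurable
        have := φ.continuous
        unfold Function.uncurry
        fun_prop
      · rintro ⟨t, x⟩
        simp only [Function.uncurry]
        rw [norm_mul, norm_mul, norm_mul, norm_mul, Complex.norm_real]
        have : ‖Real.sin (x * t)‖ ≤ 1 := Real.abs_sin_le_one _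
        have h3 : ‖G x‖ * ‖Real.sin (x * t)‖ ≤ ‖G x‖ := mul_le_of_le_one_right (norm_nonneg _) this
        rw [mul_comm ‖φ t‖]
        gcongr
    calc ∫ t : ℝ, S n t * φ t = ∫ t : ℝ, ∫ x in Set.Ioc (0:ℝ) n,
          (Complex.I / Real.pi : ℂ) * (G x * (Real.sin (x * t) : ℂ) * φ t) := by
          congr 1; ext t
          simp only [S]
          rw [intervalIntegral.integral_of_le hn, integral_const_mul, integral_mul_const]
          ring
      _ = ∫ x in Set.Ioc (0:ℝ) n, ∫ t : ℝ,
          (Complex.I / Real.pi : ℂ) * (G x * (Real.sin (x * t) : ℂ) * φ t) :=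
          integral_integral_swap hprod
      _ = _ := by
          congr 1; ext x
          rw [hodd]
          have : ∀ t : ℝ, (Complex.I / Real.pi : ℂ) * (G x * (Real.sin (x * t) : ℂ) * φ t)
            = G x * ((Complex.I / Real.pi : ℂ) * ((Real.sin (x * t) : ℂ) * φ t)) := by
            intro t; ring
          simp_rw [this]
          rw [integral_const_mul, integral_const_mul, hsin]
          ring
  have hneg : Integrable (fun x => G (-x) * ψ (-x)) := hGψ.comp_neg
  have L3 : Tendsto (fun n : ℕ => ∫ x in (0:ℝ)..n, (G x * ψ x + G (-x) * ψ (-x))) atTop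
      (nhds (∫ x : ℝ, G x * ψ x)) := by
    have e : ∫ x : ℝ, G x * ψ x = ∫ x in Set.Ioi (0:ℝ), (G x * ψ x + G (-x) * ψ (-x)) := by
      rw [integral_add hGψ.integrableOn hneg.integrableOn,
        integral_comp_neg_Ioi 0 (fun x => G x * ψ x), neg_zero, add_comm]
      exact (intervalIntegral.integral_Iic_add_Ioi hGψ.integrableOn hGψ.integrableOn).symm
    rw [e]
    exact intervalIntegral_tendsto_integral_Ioi 0 (hGψ.add hneg).integrableOn
      tendsto_natCast_atTop_atTop
  simp_rw [← L2] at L3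
  exact tendsto_nhds_unique L3 L1

lemma Mih.cont {n : ℕ} {C : ℝ} {f : ℝ → ℂ} (hf : Mih n C f) : Continuous f := hf.cd.continuous

lemma Mih.norm_le {n : ℕ} {C : ℝ} {f : ℝ → ℂ} (hf : Mih n C f) (x : ℝ) : ‖f x‖ ≤ C := by
  simpa using hf.bd x 0 (by omega)

lemma Mih.integrable {n : ℕ} {C : ℝ} {f : ℝ → ℂ} (hf : Mih n C f) (η : SchwartzMap ℝ ℂ) :
    Integrable (fun x => f x * η x) :=
  η.integrable.bdd_mul (c := C) hf.cont.aestronglyMeasurable (Eventually.of_forall hf.norm_le)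

lemma Mih.deriv_cont {n : ℕ} {C : ℝ} {f : ℝ → ℂ} (hf : Mih (n + 1) C f) : Continuous (deriv f) :=
  hf.cd.continuous_deriv (by exact_mod_cast (by omega))

lemma Mih.deriv_le {n : ℕ} {C : ℝ} {f : ℝ → ℂ} (hf : Mih (n + 1) C f) (x : ℝ) :
    ‖deriv f x‖ ≤ C / (1 + |x|) := by
  have := hf.bd x 1 (by omega)
  rwa [iteratedDeriv_one, pow_one] at this

lemma Mih.deriv_integrable {n : ℕ} {C : ℝ} {f : ℝ → ℂ} (hf : Mih (n + 1) C f)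
    (η : SchwartzMap ℝ ℂ) : Integrable (fun x => deriv f x * η x) :=
  η.integrable.bdd_mul (c := C) hf.deriv_cont.aestronglyMeasurable
    (Eventually.of_forall fun x => (hf.deriv_le x).trans
      (div_le_self hf.nonneg (by linarith [abs_nonneg x])))

lemma Mih.ibp {n : ℕ} {C : ℝ} {f : ℝ → ℂ} (hf : Mih (n + 1) C f) (η : SchwartzMap ℝ ℂ) :
    ∫ x : ℝ, f x * Dop η x = - ∫ x : ℝ, deriv f x * η x := by
  have hd : Differentiable ℝ f := hf.cd.differentiable (by simp)
  exact integral_mul_deriv_eq_deriv_mul_of_integrable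
    (fun x _ => (hd x).hasDerivAt) (fun x _ => (η.differentiable x).hasDerivAt)
    (hf.integrable (Dop η)) (hf.deriv_integrable η) (hf.integrable η)

lemma Mih.ibpB {n : ℕ} {C : ℝ} {f : ℝ → ℂ} (hf : Mih (n + 1) C f) (η : SchwartzMap ℝ ℂ) :
    ∫ x : ℝ, f x * Bop η x = ∫ x : ℝ, _root_.Dx f x * η x := by
  have h := hf.ibp (Xop η)
  rw [Dop_Xop] at h
  have e1 : ∫ x : ℝ, f x * (η + Bop η) x = (∫ x : ℝ, f x * η x) + ∫ x : ℝ, f x * Bop η x := by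
    rw [← integral_add (hf.integrable _) (hf.integrable _)]
    congr 1; ext x; simp; ring
  have e2 : ∫ x : ℝ, _root_.Dx f x * η x
      = - ((∫ x : ℝ, f x * η x) + ∫ x : ℝ, deriv f x * Xop η x) := by
    rw [← integral_add (hf.integrable _) (hf.deriv_integrable _), ← integral_neg]
    congr 1; ext x; simp [_root_.Dx, Xop_apply]; ring
  rw [e2]
  linear_combination h - e1

lemma Mih.ibpB_iter {k : ℕ} {C : ℝ} {f : ℝ → ℂ} (hf : Mih (k + 2) C f) (η : SchwartzMap ℝ ℂ) :
    ∀ l ≤ k, ∫ x : ℝ, f x * (Bop^[l] η) x = ∫ x : ℝ, (_root_.Dx^[l] f) x * η x := by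
  intro l
  induction l generalizing η with
  | zero => intro _; rfl
  | succ l ih =>
    intro hl
    rw [Function.iterate_succ_apply, ih (Bop η) (by omega), Function.iterate_succ_apply']
    exact ((hf.iter l (by omega)).mono (m := 0 + 1) (by omega) le_rfl).ibpB η

lemma Mih.osc {C : ℝ} {f : ℝ → ℂ} (hf : Mih 2 C f) (c : ℂ) (hc : ‖c‖ = 1) :
    Osc C (fun x => c * deriv f x) (fun x => c * iteratedDeriv 2 f x) := by
  refine ⟨fun x => ?_, ?_, fun x => ?_, fun x => ?_⟩
  · have h1 := (hf.cd.differentiable_iteratedDeriv 1 (by exact_mod_cast (by omega))) x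
    have h2 := h1.hasDerivAt
    rw [← iteratedDeriv_succ, iteratedDeriv_one] at h2
    exact h2.const_mul c
  · exact continuous_const.mul (hf.cd.continuous_iteratedDeriv 2 le_rfl)
  · rw [norm_mul, hc, one_mul]
    exact Mih.deriv_le (n := 1) hf x
  · rw [norm_mul, hc, one_mul]
    exact hf.bd x 2 le_rfl

lemma FT_reflect (f : ℝ → ℂ) (ξ : ℝ) : FT (fun x => f (-x)) ξ = FT f (-ξ) := by
  unfold FT
  rw [← integral_neg_eq_self]
  congr 1; ext x; simp

theorem stmt2 (k : ℕ) :
    ∃ C'' : ℝ, ∀ C : ℝ, 0 ≤ C →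
      ∀ T : SchwartzMap ℝ ℂ →L[ℂ] ℂ,
      -- `T` is even
      (∀ φ ψ : SchwartzMap ℝ ℂ, (∀ x : ℝ, ψ x = φ (-x)) → T ψ = T φ) →
      ∀ g : ℝ → ℂ, ContDiff ℝ (k + 2 : ℕ) g →
      -- Mihlin condition of order `k+2` on `g`
      (∀ ζ : ℝ, ∀ j : ℕ, j ≤ k + 2 → ‖iteratedDeriv j g ζ‖ ≤ C / (1 + |ζ|) ^ j) →
      -- the Fourier transform of `T` is the function `g`
      (∀ φ ψ : SchwartzMap ℝ ℂ,
        (∀ ξ : ℝ, ψ ξ = ∫ x : ℝ, φ x * Complex.exp (-(Complex.I * ξ * x))) →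
        T ψ = ∫ ζ : ℝ, g ζ * φ ζ) →
      -- conclusion: for each `ℓ ≤ k` the distribution `t · Oᶫ T` is a bounded function
      ∀ ℓ : ℕ, ℓ ≤ k → ∃ h : ℝ → ℂ, Measurable h ∧ (∀ t : ℝ, ‖h t‖ ≤ C'' * C) ∧
        ∀ φ χ : SchwartzMap ℝ ℂ,
          (∀ t : ℝ, χ t = Aop^[ℓ] (fun s : ℝ => (s : ℂ) * φ s) t) →
          T χ = ∫ t : ℝ, h t * φ t := by
  
  refine ⟨(k + 4) ^ k, ?_⟩
  intro C hC T hT g hg hgb hF l hl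
  have hM : Mih (k + 2) C g := ⟨hg, hgb⟩
  set f : ℝ → ℂ := fun x => (1 / 2 : ℂ) • (g x + g (-x)) with hf
  have hMf : Mih (k + 2) C f := hM.evenPart
  have hfe : ∀ x, f (-x) = f x := by intro x; simp [hf, add_comm]
  -- the pairing with the even part
  have hF2 : ∀ η χ : SchwartzMap ℝ ℂ, (∀ ξ, χ ξ = FT η ξ) → T χ = ∫ x : ℝ, f x * η x := by
    intro η χ h
    let R : SchwartzMap ℝ ℂ → SchwartzMap ℝ ℂ :=
      SchwartzMap.compCLMOfContinuousLinearEquiv ℂ (ContinuousLinearEquiv.neg ℝ (M := ℝ))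
    have hR : ∀ (θ : SchwartzMap ℝ ℂ) (x : ℝ), R θ x = θ (-x) := fun θ x => rfl
    have h1 : T χ = ∫ x : ℝ, g x * η x := hF η χ h
    have h2 : T (R χ) = ∫ x : ℝ, g x * R η x := by
      refine hF (R η) (R χ) fun ξ => ?_
      rw [hR, h, ← FT_reflect]
      rfl
    rw [hT χ (R χ) (hR χ)] at h2
    have h3 : ∫ x : ℝ, g x * R η x = ∫ x : ℝ, g (-x) * η x := by
      rw [← integral_neg_eq_self]
      simp [hR]
    have hi : Integrable (fun x => g (-x) * η x) := by
      have := (hM.integrable (R η)).comp_neg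
      simpa [hR] using this
    have h4 : ∫ x : ℝ, f x * η x = (1 / 2 : ℂ) * ((∫ x : ℝ, g x * η x) + ∫ x : ℝ, g (-x) * η x) := by
      rw [← integral_add (hM.integrable η) hi, ← integral_const_mul]
      congr 1; ext x; simp [hf]; ring
    rw [h4, ← h3, ← h1, ← h2]; ring
  have hMl : Mih 2 ((k + 4) ^ k * C) (Dx^[l] f) := by
    refine (hMf.iter l hl).mono (by omega) ?_
    gcongr
    linarith [(Nat.cast_nonneg k : (0:ℝ) ≤ k)]
  obtain ⟨H, hHm, hHb, hH⟩ := (hMl.osc Complex.I Complex.norm_I).rep (by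
    intro x
    rw [deriv_even (Dx_iter_even hfe l)]; ring)
  refine ⟨H, hHm, hHb, ?_⟩
  intro φ χ hχ
  obtain ⟨ψ, hψ1, hψ2⟩ := FT_inv φ
  rw [← hH φ ψ hψ2]
  have e1 : (fun s : ℝ => (s : ℂ) * φ s) = FT ((-Complex.I) • Dop ψ : SchwartzMap ℝ ℂ) := by
    ext s
    have := FT_const_mul (-Complex.I) (Dop ψ) s
    refine Eq.trans ?_ this.symm
    rw [FT_Dop, hψ1]
    linear_combination (s * FT ψ s) * Complex.I_sq
  rw [e1] at hχ
  simp_rw [Aop_iter_FT] at hχ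
  rw [hF2 _ χ hχ, hMf.ibpB_iter _ l hl]
  have h5 := Mih.ibp (n := 1) hMl ψ
  calc _ = -Complex.I * ∫ x : ℝ, (Dx^[l] f) x * Dop ψ x := by
        rw [← integral_const_mul]
        congr 1; ext x; simp; ring
    _ = Complex.I * ∫ x : ℝ, deriv (Dx^[l] f) x * ψ x := by rw [h5]; ring
    _ = _ := by
        rw [← integral_const_mul]
        congr 1; ext x; ring
end
end
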